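/- arXiv:2412.02064 — 2 statements merged into one kernel-verified Lean document; each statement's English description precedes it below -/
import Mathlib

section
/- Let m ≥ 1 and let J = D_m be the m×m antidiagonal matrix. Let M be an m×m complex matrix satisfying M·J = −J·Mᵀ, and suppose I + M is invertible (I the m×m identity matrix). Then the matrix g := (I + M)^{−1}(I − M) satisfies g·J·gᵀ = J and det(g) = 1. -/
open Matrix

/-- The `m × m` antidiagonal matrix `D_m`, with `(D_m)_{ij} = 1` if `i + j = m + 1`
(1-indexed) and `0` otherwise. -/
noncomputable def Dmat (m : ℕ) : Matrix (Fin m) (Fin m) ℂ :=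
  fun i j => if (i : ℕ) + (j : ℕ) = m - 1 then 1 else 0

theorem Dmat_mul_self (m : ℕ) : Dmat m * Dmat m = 1 := by
  ext i j
  rw [Matrix.mul_apply, Finset.sum_eq_single (Fin.rev i)]
  · simp only [Dmat, Fin.val_rev, Matrix.one_apply, Fin.ext_iff]
    have hi := i.2
    have hj := j.2
    rw [if_pos (by omega), one_mul]
    congr 1
    apply propext
    constructor <;> intro h <;> omega
  · intro b _ hb
    have hi := i.2
    have hb' : (b : ℕ) ≠ m - (i + 1) := fun h => hb (Fin.ext (by rw [Fin.val_rev]; exact h))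
    simp only [Dmat]
    rw [if_neg (by omega), zero_mul]
  · simp

theorem cayley_transform_orthogonal
    (m : ℕ) (hm : 1 ≤ m) (M : Matrix (Fin m) (Fin m) ℂ)
    (hM : M * Dmat m = -(Dmat m * Mᵀ))
    (hinv : IsUnit (1 + M)) :
    ((1 + M)⁻¹ * (1 - M)) * Dmat m * ((1 + M)⁻¹ * (1 - M))ᵀ = Dmat m ∧
    ((1 + M)⁻¹ * (1 - M)).det = 1 := by
  have hA : IsUnit (1 + M).det := (Matrix.isUnit_iff_isUnit_det _).mp hinv
  have h1 : (1 - M) * Dmat m = Dmat m * (1 + M)ᵀ := by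
    rw [sub_mul, hM, transpose_add, mul_add, transpose_one, one_mul, mul_one, sub_neg_eq_add]
  have h2 : (1 + M) * Dmat m = Dmat m * (1 - M)ᵀ := by
    rw [add_mul, hM, transpose_sub, mul_sub, transpose_one, one_mul, mul_one, sub_eq_add_neg]
  have hT : (1 + M)ᵀ * ((1 + M)⁻¹)ᵀ = 1 := by
    rw [← transpose_mul, Matrix.nonsing_inv_mul _ hA, transpose_one]
  have hc : (1 - M) * (1 + M) = (1 + M) * (1 - M) := by noncomm_ring
  constructor
  · calc ((1 + M)⁻¹ * (1 - M)) * Dmat m * ((1 + M)⁻¹ * (1 - M))ᵀ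
        = (1 + M)⁻¹ * (1 - M) * (Dmat m * (1 - M)ᵀ) * ((1 + M)⁻¹)ᵀ := by
          rw [transpose_mul]; simp only [Matrix.mul_assoc]
      _ = (1 + M)⁻¹ * ((1 - M) * (1 + M)) * Dmat m * ((1 + M)⁻¹)ᵀ := by
          rw [← h2]; simp only [Matrix.mul_assoc]
      _ = ((1 + M)⁻¹ * (1 + M)) * ((1 - M) * Dmat m) * ((1 + M)⁻¹)ᵀ := by
          rw [hc]; simp only [Matrix.mul_assoc]
      _ = Dmat m := by
          rw [Matrix.nonsing_inv_mul _ hA, one_mul, h1, Matrix.mul_assoc, hT, mul_one]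
  · have hJ : (Dmat m).det ≠ 0 := by
      intro h
      have := congrArg Matrix.det (Dmat_mul_self m)
      simp [h] at this
    have h3 := congrArg Matrix.det h1
    rw [det_mul, det_mul, det_transpose, mul_comm] at h3
    rw [det_mul, mul_left_cancel₀ hJ h3, ← det_mul, Matrix.nonsing_inv_mul _ hA, det_one]
end

section
/- Let n ≥ 1, let w ∈ S_n, and let E^• be the coordinate flag in ℂ^n. Let M = (m_{ij}) be any n×n complex matrix satisfying: m_{ij} = 1 if i = w(j); m_{ij} = 0 if i < w(j) or w^{−1}(i) < j; and m_{ij} arbitrary otherwise (a Stiefel-coordinate matrix for w). For i ∈ {1, …, n} let F_i be the span of the first i columns of M. Then F_• = (F_1 ⊂ F_2 ⊂ … ⊂ F_n) is a complete flag in ℂ^n and dim(F_i ∩ E^j) = k_w(i,j) for all i, j ∈ {1, …, n}; that is, the flag F_• lies in the Schubert cell Ω_w(E^•). -/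
open scoped Classical

/-- The coordinate flag in `ℂ^m`: `E^j` is the span of the standard basis
vectors `e_{j+1}, …, e_m` (1-indexed). -/
noncomputable def coordFlag (m : ℕ) (j : ℕ) : Submodule ℂ (Fin m → ℂ) :=
  Submodule.span ℂ ((fun r : Fin m => Pi.single r (1 : ℂ)) '' {r | j ≤ (r : ℕ)})

/-- `k_w(i,j) = #{r ∈ {1,…,i} : w(r) > j}` (with `w` 0-indexed, `i`, `j` 1-indexed). -/
noncomputable def kNum (m : ℕ) (w : Equiv.Perm (Fin m)) (i j : ℕ) : ℕ :=
  (Finset.univ.filter (fun r : Fin m => (r : ℕ) + 1 ≤ i ∧ j < (w r : ℕ) + 1)).card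

/-- The flag `F` lies in the Schubert cell `Ω_w(E^•)`. -/
noncomputable def inSchubertCell (m : ℕ) (w : Equiv.Perm (Fin m))
    (F : ℕ → Submodule ℂ (Fin m → ℂ)) : Prop :=
  ∀ i ∈ Finset.Icc 1 m, ∀ j ∈ Finset.Icc 1 m,
    Module.finrank ℂ ↥(F i ⊓ coordFlag m j) = kNum m w i j

/-- The flag whose `i`-th subspace is the span of the first `i` columns of `M`. -/
noncomputable def stiefelFlag (m : ℕ) (M : Matrix (Fin m) (Fin m) ℂ) (i : ℕ) :
    Submodule ℂ (Fin m → ℂ) :=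
  Submodule.span ℂ ((fun j : Fin m => (fun r => M r j)) '' {j | (j : ℕ) < i})

lemma mem_coordFlag_aux (m j : ℕ) (v : Fin m → ℂ) :
    v ∈ coordFlag m j ↔ ∀ r : Fin m, (r : ℕ) < j → v r = 0 := by
  constructor
  · intro h r hr
    have hle : coordFlag m j ≤ LinearMap.ker (LinearMap.proj r : (Fin m → ℂ) →ₗ[ℂ] ℂ) := by
      unfold coordFlag
      rw [Submodule.span_le]
      rintro _ ⟨s, hs, rfl⟩
      have hne : r ≠ s := by
        rintro rfl
        simp only [Set.mem_setOf_eq] at hs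
        omega
      simp [hne]
    simpa using hle h
  · intro h
    have hv : v = ∑ r : Fin m, v r • (Pi.single r (1 : ℂ) : Fin m → ℂ) :=
      pi_eq_sum_univ' v
    rw [hv]
    refine Submodule.sum_mem _ fun r _ => ?_
    by_cases hr : (r : ℕ) < j
    · rw [h r hr, zero_smul]
      exact Submodule.zero_mem _
    · exact Submodule.smul_mem _ _ (Submodule.subset_span ⟨r, by simpa using hr, rfl⟩)

lemma key_aux {n : ℕ} (w : Equiv.Perm (Fin n)) (M : Matrix (Fin n) (Fin n) ℂ)
    (h1 : ∀ i j : Fin n, i = w j → M i j = 1)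
    (h0 : ∀ i j : Fin n, i < w j → M i j = 0) (J : ℕ) (c : Fin n → ℂ)
    (hc : ∀ r : Fin n, (r : ℕ) < J → ∑ j, c j * M r j = 0) :
    ∀ (N : ℕ) (k : Fin n), (w k : ℕ) = N → (w k : ℕ) < J → c k = 0 := by
  intro N
  induction N using Nat.strong_induction_on with
  | _ N ih =>
    intro k hk hJ
    have h := hc (w k) hJ
    rw [Finset.sum_eq_single k] at h
    · simpa [h1 (w k) k rfl] using h
    · intro b _ hb
      rcases lt_trichotomy (w b) (w k) with hlt | heq | hgt
      · have hlt' : (w b : ℕ) < (w k : ℕ) := hlt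
        rw [ih (w b) (by omega) b rfl (by omega), zero_mul]
      · exact absurd (w.injective heq) hb
      · rw [h0 _ _ hgt, mul_zero]
    · simp

lemma li_aux {n : ℕ} (w : Equiv.Perm (Fin n)) (M : Matrix (Fin n) (Fin n) ℂ)
    (h1 : ∀ i j : Fin n, i = w j → M i j = 1)
    (h0 : ∀ i j : Fin n, i < w j → M i j = 0) :
    LinearIndependent ℂ (fun j : Fin n => (fun r => M r j)) := by
  rw [Fintype.linearIndependent_iff]
  intro c hc k
  refine key_aux w M h1 h0 n c (fun r _ => ?_) _ k rfl (w k).2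
  simpa using congrFun hc r

lemma finrank_aux {n : ℕ} (v : Fin n → Fin n → ℂ) (hv : LinearIndependent ℂ v)
    (S : Set (Fin n)) :
    Module.finrank ℂ ↥(Submodule.span ℂ (v '' S)) = (Finset.univ.filter (· ∈ S)).card := by
  have h := finrank_span_eq_card (hv.comp (Subtype.val : S → Fin n) Subtype.val_injective)
  rw [Set.range_comp, Subtype.range_coe] at h
  rw [h, Fintype.card_subtype]

lemma inter_aux {n : ℕ} (w : Equiv.Perm (Fin n)) (M : Matrix (Fin n) (Fin n) ℂ)
    (h1 : ∀ i j : Fin n, i = w j → M i j = 1)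
    (h0 : ∀ i j : Fin n, i < w j → M i j = 0) (i j : ℕ) :
    stiefelFlag n M i ⊓ coordFlag n j = Submodule.span ℂ
      ((fun j : Fin n => (fun r => M r j)) '' {k | (k : ℕ) < i ∧ j ≤ (w k : ℕ)}) := by
  apply le_antisymm
  · rintro x ⟨hx, hxE⟩
    have hx' : x ∈ stiefelFlag n M i := hx
    have hxE' := (mem_coordFlag_aux n j x).1 hxE
    unfold stiefelFlag at hx'
    rw [Finsupp.mem_span_image_iff_linearCombination] at hx'
    obtain ⟨l, hl, rfl⟩ := hx'
    have hsum : Finsupp.linearCombination ℂ (fun j : Fin n => (fun r => M r j)) l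
        = ∑ k, l k • (fun r => M r k) := by
      rw [Finsupp.linearCombination_apply, Finsupp.sum_fintype]
      simp
    rw [hsum] at hxE' ⊢
    have hz := key_aux w M h1 h0 j l (fun r hr => by simpa using hxE' r hr)
    refine Submodule.sum_mem _ fun k _ => ?_
    by_cases hk : l k = 0
    · rw [hk, zero_smul]
      exact Submodule.zero_mem _
    · refine Submodule.smul_mem _ _ (Submodule.subset_span ⟨k, ⟨?_, ?_⟩, rfl⟩)
      · exact hl (by simpa using hk)
      · by_contra hlt
        exact hk (hz _ k rfl (by omega))
  · rw [Submodule.span_le]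
    rintro _ ⟨k, ⟨hk, hj⟩, rfl⟩
    refine ⟨Submodule.subset_span ⟨k, hk, rfl⟩, (mem_coordFlag_aux n j _).2 fun r hr => ?_⟩
    exact h0 r k (by rw [Fin.lt_def]; omega)

theorem stiefel_coordinates_in_schubert_cell
    (n : ℕ) (hn : 1 ≤ n) (w : Equiv.Perm (Fin n))
    (M : Matrix (Fin n) (Fin n) ℂ)
    (h1 : ∀ i j : Fin n, i = w j → M i j = 1)
    (h0 : ∀ i j : Fin n, (i < w j ∨ w⁻¹ i < j) → M i j = 0) :
    (∀ i ∈ Finset.Icc 1 n, Module.finrank ℂ ↥(stiefelFlag n M i) = i) ∧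
    stiefelFlag n M n = ⊤ ∧
    inSchubertCell n w (stiefelFlag n M) := by
  have h0' : ∀ i j : Fin n, i < w j → M i j = 0 := fun i j h => h0 i j (Or.inl h)
  have hli := li_aux w M h1 h0'
  have hdim : ∀ i ∈ Finset.Icc 1 n, Module.finrank ℂ ↥(stiefelFlag n M i) = i := by
    intro i hi
    rw [Finset.mem_Icc] at hi
    unfold stiefelFlag
    rw [finrank_aux _ hli]
    simp only [Set.mem_setOf_eq]
    rw [Fin.card_filter_val_lt]
    omega
  refine ⟨hdim, ?_, ?_⟩
  · apply Submodule.eq_top_of_finrank_eq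
    rw [hdim n (by simp [hn])]
    simp
  · intro i _ j _
    rw [inter_aux w M h1 h0', finrank_aux _ hli]
    unfold kNum
    congr 1
    ext k
    simp only [Set.mem_setOf_eq, Finset.mem_filter, Finset.mem_univ, true_and]
    omega
end
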